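/- Kronecker canonical form: every m×n complex matrix pencil A − λB is strictly equivalent to a direct sum of Kronecker canonical blocks of the forms E_k(μ) with μ ∈ ℂ, E_k(∞), L_k, and L_kᵀ, and this direct sum is uniquely determined up to permutation of the summands. -/

import Mathlib

/-!
Basic framework: a complex `m × n` matrix pencil `A - λ B` is formalized as the
pair `(A, B)` of matrices.  We define strict equivalence, congruence,
skew-symmetry, orbits, direct sums, and the cover relations for the orbit
closure hierarchies (in the Euclidean topology).
-/

open Matrix

noncomputable section

/-- An `m × n` complex matrix pencil `A - λ B`, formalized as the pair `(A, B)`. -/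
abbrev Pencil (m n : ℕ) : Type :=
  Matrix (Fin m) (Fin n) ℂ × Matrix (Fin m) (Fin n) ℂ

namespace Pencil

/-- Strict equivalence of matrix pencils: `Q⁻¹ * A * R = C` and `Q⁻¹ * B * R = D`
for some invertible `Q`, `R`. -/
def StrictEquiv {m n : ℕ} (P Q : Pencil m n) : Prop :=
  ∃ (S : Matrix (Fin m) (Fin m) ℂ) (R : Matrix (Fin n) (Fin n) ℂ),
    IsUnit S ∧ IsUnit R ∧ S⁻¹ * P.1 * R = Q.1 ∧ S⁻¹ * P.2 * R = Q.2

/-- The strict-equivalence orbit of a pencil. -/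
def orbE {m n : ℕ} (P : Pencil m n) : Set (Pencil m n) :=
  {Q | StrictEquiv P Q}

/-- A pencil `A - λ B` is skew-symmetric if `Aᵀ = -A` and `Bᵀ = -B`. -/
def IsSkew {n : ℕ} (P : Pencil n n) : Prop :=
  P.1ᵀ = -P.1 ∧ P.2ᵀ = -P.2

/-- Congruence of (square) matrix pencils: `Sᵀ * A * S = C` and `Sᵀ * B * S = D`
for some invertible `S`. -/
def Congruent {n : ℕ} (P Q : Pencil n n) : Prop :=
  ∃ S : Matrix (Fin n) (Fin n) ℂ,
    IsUnit S ∧ Sᵀ * P.1 * S = Q.1 ∧ Sᵀ * P.2 * S = Q.2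

/-- The congruence orbit of a pencil. -/
def orbC {n : ℕ} (P : Pencil n n) : Set (Pencil n n) :=
  {Q | Congruent P Q}

/-- Direct (block-diagonal) sum of two pencils. -/
def dsum {m n p q : ℕ} (P : Pencil m n) (Q : Pencil p q) : Pencil (m + p) (n + q) :=
  ((fromBlocks P.1 0 0 Q.1).submatrix finSumFinEquiv.symm finSumFinEquiv.symm,
   (fromBlocks P.2 0 0 Q.2).submatrix finSumFinEquiv.symm finSumFinEquiv.symm)

/-- Transport a pencil along equalities of its dimensions. -/
def cast {m n m' n' : ℕ} (hm : m = m') (hn : n = n') (P : Pencil m n) : Pencil m' n' :=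
  (P.1.submatrix (finCongr hm.symm) (finCongr hn.symm),
   P.2.submatrix (finCongr hm.symm) (finCongr hn.symm))

/-- `orbE P1` covers `orbE P2` in the closure hierarchy of strict-equivalence
orbits: `P1` is not strictly equivalent to `P2`, `orbE P2 ⊆ closure (orbE P1)`,
and there is no intermediate orbit strictly between them. -/
def CoversE {m n : ℕ} (P1 P2 : Pencil m n) : Prop :=
  ¬ StrictEquiv P1 P2 ∧ orbE P2 ⊆ closure (orbE P1) ∧
    ¬ ∃ P : Pencil m n, ¬ StrictEquiv P P1 ∧ ¬ StrictEquiv P P2 ∧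
        orbE P ⊆ closure (orbE P1) ∧ orbE P2 ⊆ closure (orbE P)

/-- `orbC P1` covers `orbC P2` in the closure hierarchy of congruence orbits of
skew-symmetric pencils: `P1` is not congruent to `P2`,
`orbC P2 ⊆ closure (orbC P1)`, and there is no congruence orbit of a
skew-symmetric pencil strictly between them. -/
def CoversC {n : ℕ} (P1 P2 : Pencil n n) : Prop :=
  ¬ Congruent P1 P2 ∧ orbC P2 ⊆ closure (orbC P1) ∧
    ¬ ∃ P : Pencil n n, IsSkew P ∧ ¬ Congruent P P1 ∧ ¬ Congruent P P2 ∧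
        orbC P ⊆ closure (orbC P1) ∧ orbC P2 ⊆ closure (orbC P)

end Pencil

/-! Canonical building blocks. -/

/-- The `k × k` Jordan block `J_k(μ)`. -/
def Jmat (k : ℕ) (μ : ℂ) : Matrix (Fin k) (Fin k) ℂ :=
  Matrix.of fun i j => if (j : ℕ) = (i : ℕ) then μ else if (j : ℕ) = (i : ℕ) + 1 then 1 else 0

/-- The `k × (k+1)` matrix `F_k` with ones on the superdiagonal. -/
def Fmat (k : ℕ) : Matrix (Fin k) (Fin (k + 1)) ℂ :=
  Matrix.of fun i j => if (j : ℕ) = (i : ℕ) + 1 then 1 else 0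

/-- The `k × (k+1)` matrix `G_k` with ones on the diagonal. -/
def Gmat (k : ℕ) : Matrix (Fin k) (Fin (k + 1)) ℂ :=
  Matrix.of fun i j => if (j : ℕ) = (i : ℕ) then 1 else 0

/-- The Kronecker block `E_k(μ) = J_k(μ) - λ I_k`. -/
def Eblk (k : ℕ) (μ : ℂ) : Pencil k k := (Jmat k μ, 1)

/-- The Kronecker block `E_k(∞) = I_k - λ J_k(0)`. -/
def EInfblk (k : ℕ) : Pencil k k := (1, Jmat k 0)

/-- The Kronecker block `L_k = F_k - λ G_k`. -/
def Lblk (k : ℕ) : Pencil k (k + 1) := (Fmat k, Gmat k)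

/-- The Kronecker block `L_kᵀ = F_kᵀ - λ G_kᵀ`. -/
def LTblk (k : ℕ) : Pencil (k + 1) k := ((Fmat k)ᵀ, (Gmat k)ᵀ)

/-- The skew-symmetric matrix `[[0, X], [-Xᵀ, 0]]`. -/
def skewPair {p q : ℕ} (X : Matrix (Fin p) (Fin q) ℂ) :
    Matrix (Fin (p + q)) (Fin (p + q)) ℂ :=
  (fromBlocks 0 X (-Xᵀ) 0).submatrix finSumFinEquiv.symm finSumFinEquiv.symm

/-- The skew-symmetric canonical block `H_h(μ)` (size `2h × 2h`). -/
def Hblk (h : ℕ) (μ : ℂ) : Pencil (h + h) (h + h) :=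
  (skewPair (Jmat h μ), skewPair (1 : Matrix (Fin h) (Fin h) ℂ))

/-- The skew-symmetric canonical block `K_k = H_k(∞)` (size `2k × 2k`). -/
def Kblk (k : ℕ) : Pencil (k + k) (k + k) :=
  (skewPair (1 : Matrix (Fin k) (Fin k) ℂ), skewPair (Jmat k 0))

/-- The skew-symmetric canonical block `M_m` (size `(2m+1) × (2m+1)`). -/
def Mblk (m : ℕ) : Pencil (m + (m + 1)) (m + (m + 1)) :=
  (skewPair (Fmat m), skewPair (Gmat m))

/-! Kronecker canonical forms as multisets of block descriptors. -/

/-- Descriptor of a Kronecker canonical block. -/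
inductive KBlock : Type
  | E : ℕ → ℂ → KBlock        -- `E_k(μ)`, `μ ∈ ℂ`
  | Einf : ℕ → KBlock          -- `E_k(∞)`
  | L : ℕ → KBlock             -- `L_k`
  | LT : ℕ → KBlock            -- `L_kᵀ`

namespace KBlock

/-- Number of rows of a block. -/
def rows : KBlock → ℕ
  | E k _ => k
  | Einf k => k
  | L k => k
  | LT k => k + 1

/-- Number of columns of a block. -/
def cols : KBlock → ℕ
  | E k _ => k
  | Einf k => k
  | L k => k + 1
  | LT k => k

/-- The index of a block. -/
def idx : KBlock → ℕ
  | E k _ => k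
  | Einf k => k
  | L k => k
  | LT k => k

/-- A block is valid (may occur in a Kronecker canonical form) if Jordan blocks
have size at least one. -/
def valid : KBlock → Prop
  | E k _ => 1 ≤ k
  | Einf k => 1 ≤ k
  | L _ => True
  | LT _ => True

/-- The pencil corresponding to a block descriptor. -/
def toPencil : (b : KBlock) → Pencil b.rows b.cols
  | E k μ => Eblk k μ
  | Einf k => EInfblk k
  | L k => Lblk k
  | LT k => LTblk k

end KBlock

/-- The block `E_k(μ)` for an eigenvalue `μ ∈ ℂ ∪ {∞}`; `none` encodes `∞`. -/
def Eb : Option ℂ → ℕ → KBlock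
  | some μ, k => KBlock.E k μ
  | none, k => KBlock.Einf k

/-- Total number of rows of a list of blocks. -/
def rowsSum : List KBlock → ℕ
  | [] => 0
  | b :: t => b.rows + rowsSum t

/-- Total number of columns of a list of blocks. -/
def colsSum : List KBlock → ℕ
  | [] => 0
  | b :: t => b.cols + colsSum t

/-- The direct sum of the blocks in a list. -/
def pencilOfList : (l : List KBlock) → Pencil (rowsSum l) (colsSum l)
  | [] => (0, 0)
  | b :: t => Pencil.dsum b.toPencil (pencilOfList t)

/-- `s` is the multiset of blocks of a Kronecker canonical form of `P`, i.e. `P`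
is strictly equivalent to the direct sum of the blocks of `s`. -/
def RepresentsE {m n : ℕ} (P : Pencil m n) (s : Multiset KBlock) : Prop :=
  (∀ b ∈ s, b.valid) ∧
  ∃ (l : List KBlock) (hm : rowsSum l = m) (hn : colsSum l = n),
    (l : Multiset KBlock) = s ∧
    Pencil.StrictEquiv (Pencil.cast hm hn (pencilOfList l)) P

/-- Like `RepresentsE`, but also allowing degenerate (empty) blocks such as
`E_0(μ)` among the summands. -/
def WeakRepresentsE {m n : ℕ} (P : Pencil m n) (s : Multiset KBlock) : Prop :=
  ∃ (l : List KBlock) (hm : rowsSum l = m) (hn : colsSum l = n),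
    (l : Multiset KBlock) = s ∧
    Pencil.StrictEquiv (Pencil.cast hm hn (pencilOfList l)) P

/-- A pencil of linear maps between complex vector spaces. -/
@[ext]
structure LinPencil (V W : Type*) [AddCommGroup V] [Module ℂ V] [AddCommGroup W] [Module ℂ W] where
  /-- The constant coefficient. -/
  A : V →ₗ[ℂ] W
  /-- The coefficient of `-λ`. -/
  B : V →ₗ[ℂ] W

/-- The pencil of linear maps defined by a matrix pencil. -/
def Pencil.lin {m n : ℕ} (P : Pencil m n) : LinPencil (Fin n → ℂ) (Fin m → ℂ) :=
  ⟨Matrix.toLin' P.1, Matrix.toLin' P.2⟩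

@[simp]
theorem Pencil.lin_A {m n : ℕ} (P : Pencil m n) (x : Fin n → ℂ) : P.lin.A x = P.1 *ᵥ x := rfl

@[simp]
theorem Pencil.lin_B {m n : ℕ} (P : Pencil m n) (x : Fin n → ℂ) : P.lin.B x = P.2 *ᵥ x := rfl

theorem Fmat_mulVec (k : ℕ) (x : Fin (k + 1) → ℂ) (i : Fin k) :
    (Fmat k *ᵥ x) i = x i.succ := by
  rw [Matrix.mulVec, dotProduct, Finset.sum_eq_single i.succ]
  · simp [Fmat]
  · intro j _ hj
    have : (j : ℕ) ≠ i + 1 := fun h => hj (Fin.ext (by simpa using h))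
    simp [Fmat, this]
  · simp

theorem Gmat_mulVec (k : ℕ) (x : Fin (k + 1) → ℂ) (i : Fin k) :
    (Gmat k *ᵥ x) i = x i.castSucc := by
  rw [Matrix.mulVec, dotProduct, Finset.sum_eq_single i.castSucc]
  · simp [Gmat]
  · intro j _ hj
    have : (j : ℕ) ≠ i := fun h => hj (Fin.ext (by simpa using h))
    simp [Gmat, this]
  · simp

theorem Jmat_zero_mulVec (k : ℕ) (x : Fin k → ℂ) (i : Fin k) :
    (Jmat k 0 *ᵥ x) i = if h : (i : ℕ) + 1 < k then x ⟨i + 1, h⟩ else 0 := by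
  rw [Matrix.mulVec, dotProduct]
  split_ifs with h
  · rw [Finset.sum_eq_single ⟨i + 1, h⟩]
    · simp [Jmat]
    · intro j _ hj
      have : (j : ℕ) ≠ i + 1 := fun h => hj (Fin.ext (by simpa using h))
      simp [Jmat, this]
    · simp
  · refine Finset.sum_eq_zero fun j _ => ?_
    have : (j : ℕ) ≠ i + 1 := by omega
    simp [Jmat, this]

theorem Jmat_sub_smul_one (k : ℕ) (μ ν : ℂ) : Jmat k μ - ν • 1 = Jmat k (μ - ν) := by
  ext i j
  have hij : i = j ↔ (j : ℕ) = i := by rw [Fin.ext_iff, eq_comm]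
  by_cases h : (j : ℕ) = i <;> simp [Jmat, Matrix.one_apply, hij, h]

namespace LinPencil

variable {V W V₁ W₁ V₂ W₂ V₃ W₃ : Type*}
  [AddCommGroup V] [Module ℂ V] [AddCommGroup W] [Module ℂ W]
  [AddCommGroup V₁] [Module ℂ V₁] [AddCommGroup W₁] [Module ℂ W₁]
  [AddCommGroup V₂] [Module ℂ V₂] [AddCommGroup W₂] [Module ℂ W₂]
  [AddCommGroup V₃] [Module ℂ V₃] [AddCommGroup W₃] [Module ℂ W₃]

/-- Isomorphism of pencils of linear maps. -/
def Iso (P : LinPencil V W) (Q : LinPencil V₁ W₁) : Prop :=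
  ∃ (e : V ≃ₗ[ℂ] V₁) (f : W ≃ₗ[ℂ] W₁),
    (∀ x, f (P.A x) = Q.A (e x)) ∧ ∀ x, f (P.B x) = Q.B (e x)

theorem Iso.refl (P : LinPencil V W) : Iso P P :=
  ⟨LinearEquiv.refl ℂ V, LinearEquiv.refl ℂ W, fun _ => rfl, fun _ => rfl⟩

theorem Iso.symm {P : LinPencil V W} {Q : LinPencil V₁ W₁} (h : Iso P Q) : Iso Q P := by
  obtain ⟨e, f, hA, hB⟩ := h
  exact ⟨e.symm, f.symm, fun x => by simp [LinearEquiv.symm_apply_eq, hA],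
    fun x => by simp [LinearEquiv.symm_apply_eq, hB]⟩

theorem Iso.trans {P : LinPencil V W} {Q : LinPencil V₁ W₁} {R : LinPencil V₂ W₂}
    (h : Iso P Q) (h' : Iso Q R) : Iso P R := by
  obtain ⟨e, f, hA, hB⟩ := h
  obtain ⟨e', f', hA', hB'⟩ := h'
  exact ⟨e.trans e', f.trans f', fun x => by simp [hA, hA'], fun x => by simp [hB, hB']⟩

/-- The direct sum of two pencils of linear maps. -/
def prod (P : LinPencil V W) (Q : LinPencil V₁ W₁) : LinPencil (V × V₁) (W × W₁) :=
  ⟨P.A.prodMap Q.A, P.B.prodMap Q.B⟩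

theorem Iso.prod {P : LinPencil V W} {Q : LinPencil V₁ W₁} {P' : LinPencil V₂ W₂}
    {Q' : LinPencil V₃ W₃} (h : Iso P P') (h' : Iso Q Q') :
    Iso (P.prod Q) (P'.prod Q') := by
  obtain ⟨e, f, hA, hB⟩ := h
  obtain ⟨e', f', hA', hB'⟩ := h'
  exact ⟨e.prodCongr e', f.prodCongr f', fun x => by simp [LinPencil.prod, hA, hA'],
    fun x => by simp [LinPencil.prod, hB, hB']⟩

/-- Change of parameter moving the point `p` of the projective line to `0`. -/
def reparam : Option ℂ → LinPencil V W → LinPencil V W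
  | some μ, P => ⟨P.A - μ • P.B, P.B⟩
  | none, P => ⟨P.B, P.A⟩

/-- The inverse of `reparam p`. -/
def unreparam : Option ℂ → LinPencil V W → LinPencil V W
  | some μ, P => ⟨P.A + μ • P.B, P.B⟩
  | none, P => ⟨P.B, P.A⟩

@[simp]
theorem reparam_unreparam (p : Option ℂ) (P : LinPencil V W) :
    reparam p (unreparam p P) = P := by
  cases p <;> simp [reparam, unreparam]

theorem reparam_prod (p : Option ℂ) (P : LinPencil V W) (Q : LinPencil V₁ W₁) :
    reparam p (P.prod Q) = (reparam p P).prod (reparam p Q) := by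
  cases p
  · rfl
  · ext <;> simp [reparam, LinPencil.prod]

theorem iso_reparam_iff (p : Option ℂ) {P : LinPencil V W} {Q : LinPencil V₁ W₁} :
    Iso (reparam p P) (reparam p Q) ↔ Iso P Q := by
  cases p with
  | none => exact ⟨fun ⟨e, f, hA, hB⟩ => ⟨e, f, hB, hA⟩, fun ⟨e, f, hA, hB⟩ => ⟨e, f, hB, hA⟩⟩
  | some μ =>
    constructor
    · rintro ⟨e, f, hA, hB⟩
      refine ⟨e, f, fun x => ?_, hB⟩
      have h := hA x
      have h' : f (P.B x) = Q.B (e x) := hB x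
      simpa [reparam, h'] using h
    · rintro ⟨e, f, hA, hB⟩
      exact ⟨e, f, fun x => by simp [reparam, hA, hB], hB⟩

theorem bijective_coprod_ker_subtype (i : V →ₗ[ℂ] W) (q : W →ₗ[ℂ] V)
    (h : Function.Bijective (q ∘ₗ i)) :
    Function.Bijective (i.coprod (LinearMap.ker q).subtype) := by
  constructor
  · rw [injective_iff_map_eq_zero]
    rintro ⟨a, b⟩ hab
    have hab' : i a + (b : W) = 0 := by simpa using hab
    have hb : q b = 0 := b.2
    have ha : a = 0 := by
      apply (injective_iff_map_eq_zero _).1 h.1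
      have := congrArg q hab'
      simpa [hb] using this
    subst ha
    simpa using hab'
  · intro y
    obtain ⟨a, ha⟩ := h.2 (q y)
    have ha' : q (i a) = q y := ha
    exact ⟨(a, ⟨y - i a, by simp [ha']⟩), by simp⟩

/-- A pencil having `Q` as a retract, up to automorphism, splits off `Q`. -/
theorem iso_prod_of_retract {P : LinPencil V W} {Q : LinPencil V₁ W₁}
    (ι : V₁ →ₗ[ℂ] V) (κ : W₁ →ₗ[ℂ] W) (r : V →ₗ[ℂ] V₁) (s : W →ₗ[ℂ] W₁)
    (hιA : ∀ x, P.A (ι x) = κ (Q.A x)) (hιB : ∀ x, P.B (ι x) = κ (Q.B x))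
    (hrA : ∀ x, Q.A (r x) = s (P.A x)) (hrB : ∀ x, Q.B (r x) = s (P.B x))
    (hr : Function.Bijective (r ∘ₗ ι)) (hs : Function.Bijective (s ∘ₗ κ)) :
    ∃ P' : LinPencil (LinearMap.ker r) (LinearMap.ker s), Iso P (Q.prod P') := by
  let P' : LinPencil (LinearMap.ker r) (LinearMap.ker s) :=
    ⟨P.A.restrict fun x hx => by
        rw [LinearMap.mem_ker] at hx ⊢
        rw [← hrA, hx, map_zero],
      P.B.restrict fun x hx => by
        rw [LinearMap.mem_ker] at hx ⊢
        rw [← hrB, hx, map_zero]⟩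
  refine ⟨P', Iso.symm ⟨LinearEquiv.ofBijective _ (bijective_coprod_ker_subtype ι r hr),
    LinearEquiv.ofBijective _ (bijective_coprod_ker_subtype κ s hs), fun x => ?_, fun x => ?_⟩⟩
  · simp [P', LinPencil.prod, hιA]
  · simp [P', LinPencil.prod, hιB]

/-- Vectors `z` for which `A y₀ = z`, `A yᵢ₊₁ = B yᵢ` is solvable with `j` unknowns and
`B` of the last unknown in `D`. -/
def reach (P : LinPencil V W) (D : Submodule ℂ W) : ℕ → Submodule ℂ W
  | 0 => D
  | j + 1 => ((P.reach D j).comap P.B).map P.A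

theorem exists_chain_of_mem_reach (P : LinPencil V W) (D : Submodule ℂ W) (j : ℕ) (v : V)
    (h : P.B v ∈ P.reach D j) :
    ∃ x : ℕ → V, x 0 = v ∧ (∀ i < j, P.A (x (i + 1)) = P.B (x i)) ∧ P.B (x j) ∈ D := by
  induction j generalizing v with
  | zero => exact ⟨fun _ => v, rfl, by simp, h⟩
  | succ j ih =>
    obtain ⟨w, hw, hwv⟩ := h
    obtain ⟨x, hx0, hx, hxD⟩ := ih w hw
    refine ⟨fun i => Nat.casesOn i v x, rfl, ?_, hxD⟩
    rintro (_ | i) hi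
    · simpa [hx0] using hwv
    · exact hx i (by omega)

theorem exists_dual_comp_eq (P : LinPencil V W) (D : Submodule ℂ W) (s : Module.Dual ℂ W)
    (hs : ∀ w ∈ (D.comap P.B).map P.A, s w = 0) :
    ∃ s' : Module.Dual ℂ W, (∀ w ∈ D, s' w = 0) ∧ s ∘ₗ P.A = s' ∘ₗ P.B := by
  have hmem : s ∘ₗ P.A ∈ (LinearMap.ker (D.mkQ ∘ₗ P.B)).dualAnnihilator := by
    rw [Submodule.mem_dualAnnihilator]
    intro v hv
    have hv' : P.B v ∈ D := by simpa using hv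
    exact hs _ ⟨v, hv', rfl⟩
  rw [← LinearMap.range_dualMap_eq_dualAnnihilator_ker] at hmem
  obtain ⟨t, ht⟩ := hmem
  refine ⟨t ∘ₗ D.mkQ, fun w hw => ?_, ?_⟩
  · have : D.mkQ w = 0 := by simpa using hw
    simp only [LinearMap.comp_apply, this, map_zero]
  · rw [← ht]
    rfl

theorem exists_dual_chain (P : LinPencil V W) (D : Submodule ℂ W) (j : ℕ) (s : Module.Dual ℂ W)
    (hs : ∀ w ∈ P.reach D j, s w = 0) :
    ∃ σ : ℕ → Module.Dual ℂ W, σ 0 = s ∧ (∀ i < j, σ i ∘ₗ P.A = σ (i + 1) ∘ₗ P.B) ∧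
      ∀ w ∈ D, σ j w = 0 := by
  induction j generalizing s with
  | zero => exact ⟨fun _ => s, rfl, by simp, hs⟩
  | succ j ih =>
    obtain ⟨t, ht, hst⟩ := P.exists_dual_comp_eq _ s hs
    obtain ⟨σ, hσ0, hσ, hσD⟩ := ih t ht
    refine ⟨fun i => Nat.casesOn i s σ, rfl, ?_, hσD⟩
    rintro (_ | i) hi
    · simpa [hσ0] using hst
    · exact hσ i (by omega)

/-- A chain of length `k` starting at a nonzero vector of the kernel of `A`. -/
structure IsChain (P : LinPencil V W) (k : ℕ) (x : ℕ → V) : Prop where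
  ne_zero : x 0 ≠ 0
  A_zero : P.A (x 0) = 0
  A_succ : ∀ i < k, P.A (x (i + 1)) = P.B (x i)

theorem IsChain.exists_closed {P : LinPencil V W} {k : ℕ} {x : ℕ → V} (h : P.IsChain k x)
    (c : ℕ → ℂ) (n : ℕ) (hn : n ≤ k + 1) (hc : ∃ i < n, c i ≠ 0)
    (hsum : ∑ i ∈ Finset.range n, c i • x i = 0) :
    ∃ l y, P.IsChain l y ∧ P.B (y l) = 0 := by
  induction n with
  | zero => simp at hc
  | succ p ih =>
    by_cases hp : c p = 0
    · refine ih (by omega) ?_ (by simpa [Finset.sum_range_succ, hp] using hsum)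
      obtain ⟨i, hi, hci⟩ := hc
      exact ⟨i, lt_of_le_of_ne (by omega) (by rintro rfl; exact hci hp), hci⟩
    · let y : ℕ → V := fun j => ∑ i ∈ Finset.range (j + 1), c (p + i - j) • x i
      have hy0 : y 0 = c p • x 0 := by simp [y]
      have hysucc : ∀ j < k, P.A (y (j + 1)) = P.B (y j) := by
        intro j hj
        simp only [y]
        rw [Finset.sum_range_succ', map_add, map_smul, h.A_zero, smul_zero, add_zero, map_sum,
          map_sum]
        refine Finset.sum_congr rfl fun i hi => ?_
        have hi' := Finset.mem_range.1 hi
        rw [map_smul, map_smul, h.A_succ i (by omega)]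
        congr 2
        omega
      have hyp : y p = 0 := by
        rw [← hsum]
        refine Finset.sum_congr rfl fun i _ => ?_
        simp
      obtain _ | q := p
      · rw [hy0] at hyp
        exact absurd hyp (smul_ne_zero hp h.ne_zero)
      · refine ⟨q, y, ⟨?_, ?_, fun i hi => hysucc i (by omega)⟩, ?_⟩
        · rw [hy0]
          exact smul_ne_zero hp h.ne_zero
        · rw [hy0, map_smul, h.A_zero, smul_zero]
        · rw [← hysucc q (by omega), hyp, map_zero]

theorem IsChain.exists_closed_of_finrank [FiniteDimensional ℂ V] {P : LinPencil V W}
    {x : ℕ → V} (h : P.IsChain (Module.finrank ℂ V) x) :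
    ∃ l y, P.IsChain l y ∧ P.B (y l) = 0 := by
  have hdep : ¬ LinearIndependent ℂ fun i : Fin (Module.finrank ℂ V + 1) => x i := by
    intro hli
    have := hli.fintype_card_le_finrank
    simp at this
  rw [Fintype.not_linearIndependent_iff] at hdep
  obtain ⟨g, hg, i, hi⟩ := hdep
  refine h.exists_closed (fun i => if h : i < _ then g ⟨i, h⟩ else 0) _ le_rfl
    ⟨i, i.2, by simpa using ⟨Nat.lt_succ_iff.1 i.2, hi⟩⟩ ?_
  rw [Finset.sum_range, ← hg]
  exact Finset.sum_congr rfl fun i _ => by rw [dif_pos i.2]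

/-- A pair of a chain of vectors and a compatible chain of functionals. -/
structure IsDualPair (P : LinPencil V W) (c k : ℕ) (x : ℕ → V) (ρ : ℕ → Module.Dual ℂ V)
    (σ : ℕ → Module.Dual ℂ W) : Prop where
  chain : P.IsChain c x
  comp_B : ∀ i < k, ∀ v, σ i (P.B v) = ρ i v
  comp_A : ∀ i < k, ∀ v, σ i (P.A v) = ρ (i + 1) v
  pairing : ρ 0 (x 0) ≠ 0

theorem IsDualPair.apply_eq_zero {P : LinPencil V W} {c k : ℕ} {x : ℕ → V}
    {ρ : ℕ → Module.Dual ℂ V} {σ : ℕ → Module.Dual ℂ W} (h : P.IsDualPair c k x ρ σ)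
    {i j : ℕ} (hj : j ≤ c) (hi : i ≤ k) (hij : j < i) : ρ i (x j) = 0 := by
  induction j generalizing i with
  | zero =>
    obtain _ | i := i
    · omega
    · rw [← h.comp_A i (by omega), h.chain.A_zero, map_zero]
  | succ j ih =>
    obtain _ | i := i
    · omega
    · rw [← h.comp_A i (by omega), h.chain.A_succ j (by omega), h.comp_B i (by omega)]
      exact ih (by omega) (by omega) (by omega)

theorem IsDualPair.apply_self_ne_zero {P : LinPencil V W} {c k : ℕ} {x : ℕ → V}
    {ρ : ℕ → Module.Dual ℂ V} {σ : ℕ → Module.Dual ℂ W} (h : P.IsDualPair c k x ρ σ)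
    {j : ℕ} (hj : j ≤ c) (hi : j ≤ k) : ρ j (x j) ≠ 0 := by
  induction j with
  | zero => exact h.pairing
  | succ j ih =>
    rw [← h.comp_A j (by omega), h.chain.A_succ j (by omega), h.comp_B j (by omega)]
    exact ih (by omega) (by omega)

theorem bijective_pi_comp_linearCombination {n : ℕ} (x : Fin n → V) (ρ : Fin n → Module.Dual ℂ V)
    (h₀ : ∀ i j, j < i → ρ i (x j) = 0) (h₁ : ∀ i, ρ i (x i) ≠ 0) :
    Function.Bijective (LinearMap.pi ρ ∘ₗ Fintype.linearCombination ℂ x) := by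
  let T : Matrix (Fin n) (Fin n) ℂ := Matrix.of fun i j => ρ i (x j)
  have hT : LinearMap.pi ρ ∘ₗ Fintype.linearCombination ℂ x = Matrix.toLin' T := by
    refine LinearMap.ext fun a => funext fun i => ?_
    simp [T, Fintype.linearCombination_apply, Matrix.mulVec, dotProduct, mul_comm]
  have hdet : IsUnit T := by
    have hupper : T.IsUpperTriangular := fun i j hij => h₀ i j hij
    rw [Matrix.isUnit_iff_isUnit_det, Matrix.det_of_isUpperTriangular hupper, isUnit_iff_ne_zero]
    exact Finset.prod_ne_zero_iff.2 fun i _ => h₁ i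
  rw [hT]
  exact ⟨Matrix.mulVec_injective_iff_isUnit.2 hdet, Matrix.mulVec_surjective_iff_isUnit.2 hdet⟩

theorem IsDualPair.exists_iso_Lblk_prod {P : LinPencil V W} {k : ℕ} {x : ℕ → V}
    {ρ : ℕ → Module.Dual ℂ V} {σ : ℕ → Module.Dual ℂ W} (h : P.IsDualPair k k x ρ σ)
    (hclosed : P.B (x k) = 0) :
    ∃ (V' : Submodule ℂ V) (W' : Submodule ℂ W) (P' : LinPencil V' W'),
      Iso P ((Lblk k).lin.prod P') := by
  refine ⟨_, _, iso_prod_of_retract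
    (Fintype.linearCombination ℂ fun i : Fin (k + 1) => x i)
    (Fintype.linearCombination ℂ fun i : Fin k => P.B (x i))
    (LinearMap.pi fun i : Fin (k + 1) => ρ i) (LinearMap.pi fun i : Fin k => σ i)
    ?_ ?_ ?_ ?_ ?_ ?_⟩
  · intro a
    rw [Fintype.linearCombination_apply, Fintype.linearCombination_apply, Fin.sum_univ_succ]
    simp [Lblk, Fmat_mulVec, h.chain.A_zero, h.chain.A_succ]
  · intro a
    rw [Fintype.linearCombination_apply, Fintype.linearCombination_apply, Fin.sum_univ_castSucc]
    simp [Lblk, Gmat_mulVec, hclosed]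
  · intro v
    ext i
    simp [Lblk, Fmat_mulVec, h.comp_A i i.2]
  · intro v
    ext i
    simp [Lblk, Gmat_mulVec, h.comp_B i i.2]
  · exact bijective_pi_comp_linearCombination _ _
      (fun i j hij => h.apply_eq_zero (by omega) (by omega) hij)
      fun i => h.apply_self_ne_zero (by omega) (by omega)
  · refine bijective_pi_comp_linearCombination _ _ (fun i j hij => ?_) fun i => ?_
    · rw [h.comp_B i i.2]
      exact h.apply_eq_zero (by omega) (by omega) hij
    · rw [h.comp_B i i.2]
      exact h.apply_self_ne_zero (by omega) (by omega)

theorem IsDualPair.exists_iso_Eblk_prod {P : LinPencil V W} {k : ℕ} {x : ℕ → V}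
    {ρ : ℕ → Module.Dual ℂ V} {σ : ℕ → Module.Dual ℂ W} (h : P.IsDualPair k (k + 1) x ρ σ)
    (hρ : ρ (k + 1) = 0) :
    ∃ (V' : Submodule ℂ V) (W' : Submodule ℂ W) (P' : LinPencil V' W'),
      Iso P ((Eblk (k + 1) 0).lin.prod P') := by
  refine ⟨_, _, iso_prod_of_retract
    (Fintype.linearCombination ℂ fun i : Fin (k + 1) => x i)
    (Fintype.linearCombination ℂ fun i : Fin (k + 1) => P.B (x i))
    (LinearMap.pi fun i : Fin (k + 1) => ρ i) (LinearMap.pi fun i : Fin (k + 1) => σ i)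
    ?_ ?_ ?_ ?_ ?_ ?_⟩
  · intro a
    rw [Fintype.linearCombination_apply, Fintype.linearCombination_apply, Fin.sum_univ_succ,
      Fin.sum_univ_castSucc]
    simp [Eblk, Jmat_zero_mulVec, h.chain.A_zero, h.chain.A_succ, Fin.succ]
  · intro a
    simp [Eblk, Fintype.linearCombination_apply]
  · intro v
    ext i
    simp only [Eblk, Pencil.lin_A, Jmat_zero_mulVec, LinearMap.pi_apply, h.comp_A i i.2]
    split_ifs with hi
    · rfl
    · rw [show (i : ℕ) + 1 = k + 1 by omega, hρ, LinearMap.zero_apply]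
  · intro v
    ext i
    simp [Eblk, h.comp_B i i.2]
  · exact bijective_pi_comp_linearCombination _ _
      (fun i j hij => h.apply_eq_zero (by omega) (by omega) hij)
      fun i => h.apply_self_ne_zero (by omega) (by omega)
  · refine bijective_pi_comp_linearCombination _ _ (fun i j hij => ?_) fun i => ?_
    · rw [h.comp_B i i.2]
      exact h.apply_eq_zero (by omega) (by omega) hij
    · rw [h.comp_B i i.2]
      exact h.apply_self_ne_zero (by omega) (by omega)

theorem exists_iso_Lblk_prod_of_closed (P : LinPencil V W)
    (h : ∃ l y, P.IsChain l y ∧ P.B (y l) = 0) :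
    ∃ (k : ℕ) (V' : Submodule ℂ V) (W' : Submodule ℂ W) (P' : LinPencil V' W'),
      Iso P ((Lblk k).lin.prod P') := by
  classical
  obtain ⟨x, hx, hxk⟩ := Nat.find_spec h
  have hmin := fun l => Nat.find_min h (m := l)
  generalize Nat.find h = k at hx hxk hmin
  refine ⟨k, ?_⟩
  obtain _ | k := k
  · obtain ⟨f, hf⟩ : ∃ f : Module.Dual ℂ V, f (x 0) ≠ 0 := by
      by_contra! hf
      exact hx.ne_zero ((Module.forall_dual_apply_eq_zero_iff ℂ _).1 hf)
    exact IsDualPair.exists_iso_Lblk_prod (ρ := fun _ => f) (σ := 0)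
      ⟨hx, by simp, by simp, hf⟩ hxk
  · have hreach : P.B (x 0) ∉ P.reach ⊥ k := by
      intro hmem
      obtain ⟨y, hy0, hy, hyk⟩ := P.exists_chain_of_mem_reach _ _ _ hmem
      exact hmin k (by omega) ⟨y, ⟨hy0 ▸ hx.ne_zero, hy0 ▸ hx.A_zero, hy⟩, by simpa using hyk⟩
    obtain ⟨s, hs, hsmap⟩ := Submodule.exists_dual_map_eq_bot_of_notMem hreach inferInstance
    obtain ⟨σ, hσ0, hσ, -⟩ :=
      P.exists_dual_chain _ _ s fun w hw => LinearMap.le_ker_iff_map.2 hsmap hw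
    refine IsDualPair.exists_iso_Lblk_prod (σ := σ)
      (ρ := fun i => Nat.casesOn i (σ 0 ∘ₗ P.B) fun j => σ j ∘ₗ P.A)
      ⟨hx, ?_, fun _ _ _ => rfl, by simpa [hσ0] using hs⟩ hxk
    rintro (_ | i) hi v
    · rfl
    · exact (LinearMap.congr_fun (hσ i (by omega)) v).symm

theorem exists_iso_Eblk_prod_of_not_closed [FiniteDimensional ℂ V] (P : LinPencil V W)
    (hker : ∃ v ≠ 0, P.A v = 0) (h : ¬ ∃ l y, P.IsChain l y ∧ P.B (y l) = 0) :
    ∃ (k : ℕ) (V' : Submodule ℂ V) (W' : Submodule ℂ W) (P' : LinPencil V' W'),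
      Iso P ((Eblk (k + 1) 0).lin.prod P') := by
  classical
  have hbound : ∃ k, ¬ ∃ x, P.IsChain k x :=
    ⟨Module.finrank ℂ V, fun ⟨x, hx⟩ => h hx.exists_closed_of_finrank⟩
  have hk := Nat.find_spec hbound
  have hmin := fun l => Nat.find_min hbound (m := l)
  generalize Nat.find hbound = k at hk hmin
  obtain _ | k := k
  · obtain ⟨v, hv, hv'⟩ := hker
    exact absurd ⟨fun _ => v, hv, hv', by simp⟩ hk
  refine ⟨k, ?_⟩
  obtain ⟨x, hx⟩ := not_not.1 (hmin k (by omega))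
  have hreach : P.B (x 0) ∉ P.reach ⊤ (k + 1) := by
    intro hmem
    obtain ⟨y, hy0, hy, -⟩ := P.exists_chain_of_mem_reach _ _ _ hmem
    exact hk ⟨y, hy0 ▸ hx.ne_zero, hy0 ▸ hx.A_zero, hy⟩
  obtain ⟨s, hs, hsmap⟩ := Submodule.exists_dual_map_eq_bot_of_notMem hreach inferInstance
  obtain ⟨σ, hσ0, hσ, hσk⟩ :=
    P.exists_dual_chain _ _ s fun w hw => LinearMap.le_ker_iff_map.2 hsmap hw
  refine IsDualPair.exists_iso_Eblk_prod (σ := σ) (ρ := fun i => σ i ∘ₗ P.B)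
    ⟨hx, fun _ _ _ => rfl, fun i hi v => LinearMap.congr_fun (hσ i hi) v,
      by simpa [hσ0] using hs⟩ ?_
  ext v
  simpa using hσk (P.B v) trivial

theorem exists_pencil_iso [FiniteDimensional ℂ V] [FiniteDimensional ℂ W] (P : LinPencil V W) :
    ∃ (m n : ℕ) (Q : Pencil m n), Iso P Q.lin := by
  let e := (Module.finBasis ℂ V).equivFun
  let f := (Module.finBasis ℂ W).equivFun
  refine ⟨_, _, (LinearMap.toMatrix' (f.toLinearMap ∘ₗ P.A ∘ₗ e.symm.toLinearMap),
    LinearMap.toMatrix' (f.toLinearMap ∘ₗ P.B ∘ₗ e.symm.toLinearMap)), e, f, fun x => ?_,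
    fun x => ?_⟩ <;> simp [LinearMap.toMatrix'_mulVec]

/-- The blocks at a point of the projective line become nilpotent Jordan blocks when that point
is moved to `0`. -/
theorem iso_reparam_Eb (p : Option ℂ) (k : ℕ) :
    Iso (reparam p (Eb p k).toPencil.lin) (Eblk k 0).lin := by
  cases p with
  | none => exact Iso.refl _
  | some μ =>
    have hA : ∀ x : Fin k → ℂ,
        Jmat k μ *ᵥ x - μ • ((1 : Matrix (Fin k) (Fin k) ℂ) *ᵥ x) = Jmat k 0 *ᵥ x := by
      intro x
      rw [← Matrix.smul_mulVec, ← Matrix.sub_mulVec, Jmat_sub_smul_one, sub_self]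
    exact ⟨LinearEquiv.refl ℂ _, LinearEquiv.refl ℂ _, hA, fun x => rfl⟩

/-- The matrix with entries `choose i j * μ ^ (i - j)`. -/
def pascal (μ : ℂ) (n : ℕ) : Matrix (Fin n) (Fin n) ℂ :=
  Matrix.of fun i j => ((i : ℕ).choose j : ℂ) * μ ^ ((i : ℕ) - j)

theorem isUnit_pascal (μ : ℂ) (n : ℕ) : IsUnit (pascal μ n) := by
  have hlower : (pascal μ n).IsLowerTriangular := fun i j hij => by
    have hij' : (i : ℕ) < j := hij
    simp [pascal, Nat.choose_eq_zero_of_lt hij']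
  rw [Matrix.isUnit_iff_isUnit_det, Matrix.det_of_isLowerTriangular _ hlower]
  simp [pascal]

/-- The linear automorphism defined by an invertible matrix. -/
def _root_.Matrix.equivOfIsUnit {n : ℕ} (T : Matrix (Fin n) (Fin n) ℂ) (hT : IsUnit T) :
    (Fin n → ℂ) ≃ₗ[ℂ] (Fin n → ℂ) :=
  LinearEquiv.ofBijective (Matrix.toLin' T)
    ⟨Matrix.mulVec_injective_iff_isUnit.2 hT, Matrix.mulVec_surjective_iff_isUnit.2 hT⟩

@[simp]
theorem _root_.Matrix.equivOfIsUnit_apply {n : ℕ} (T : Matrix (Fin n) (Fin n) ℂ) (hT : IsUnit T)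
    (x : Fin n → ℂ) : T.equivOfIsUnit hT x = T *ᵥ x := rfl

theorem iso_reparam_Lblk (p : Option ℂ) (k : ℕ) :
    Iso (reparam p (Lblk k).lin) (Lblk k).lin := by
  cases p with
  | none =>
    refine ⟨LinearEquiv.funCongrLeft ℂ ℂ Fin.revPerm, LinearEquiv.funCongrLeft ℂ ℂ Fin.revPerm,
      fun x => ?_, fun x => ?_⟩ <;> ext i <;>
    simp [reparam, Lblk, Fmat_mulVec, Gmat_mulVec, LinearMap.funLeft_apply, Fin.rev_succ,
      Fin.rev_castSucc]
  | some μ =>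
    refine Iso.symm ⟨(pascal μ (k + 1)).equivOfIsUnit (isUnit_pascal _ _),
      (pascal μ k).equivOfIsUnit (isUnit_pascal _ _), fun x => ?_, fun x => ?_⟩
    · ext i
      simp only [reparam, Lblk, Matrix.equivOfIsUnit_apply, Pencil.lin_A, LinearMap.sub_apply,
        LinearMap.smul_apply, Pencil.lin_B, Pi.sub_apply, Pi.smul_apply, Fmat_mulVec, Gmat_mulVec,
        smul_eq_mul]
      simp only [Matrix.mulVec, dotProduct]
      rw [Finset.mul_sum, ← Finset.sum_sub_distrib, Fin.sum_univ_succ]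
      simp only [pascal, Matrix.of_apply, Fin.val_succ, Fin.val_castSucc, Fin.val_zero,
        Nat.choose_zero_right, Nat.sub_zero]
      rw [show ((1 : ℕ) : ℂ) * μ ^ ((i : ℕ) + 1) * x 0 -
        μ * (((1 : ℕ) : ℂ) * μ ^ (i : ℕ) * x 0) = 0 by ring, zero_add]
      refine Finset.sum_congr rfl fun j _ => ?_
      change _ * (Fmat k *ᵥ x) j = _
      rw [Fmat_mulVec, Nat.choose_succ_succ, Nat.add_sub_add_right]
      rcases le_or_gt ((j : ℕ) + 1) i with h | h
      · rw [show (i : ℕ) - j = (i - (j + 1)) + 1 by omega, pow_succ]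
        push_cast
        ring
      · rw [Nat.choose_eq_zero_of_lt h]
        push_cast
        ring
    · ext i
      simp only [reparam, Lblk, Matrix.equivOfIsUnit_apply, Pencil.lin_B, Gmat_mulVec]
      simp only [Matrix.mulVec, dotProduct]
      rw [Fin.sum_univ_castSucc]
      simp only [pascal, Matrix.of_apply, Fin.val_castSucc, Fin.val_last]
      rw [Nat.choose_eq_zero_of_lt i.2]
      simp only [Nat.cast_zero, zero_mul, add_zero]
      refine Finset.sum_congr rfl fun j _ => ?_
      change _ * (Gmat k *ᵥ x) j = _
      rw [Gmat_mulVec]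

theorem Iso.of_reparam_prod {P : LinPencil V W} {Q : LinPencil V₁ W₁} {Q₀ : LinPencil V₂ W₂}
    {P' : LinPencil V₃ W₃} (p : Option ℂ) (h : Iso (reparam p P) (Q₀.prod P'))
    (hQ : Iso (reparam p Q) Q₀) : Iso P (Q.prod (unreparam p P')) := by
  rw [← iso_reparam_iff p, reparam_prod, reparam_unreparam]
  exact h.trans (hQ.symm.prod (Iso.refl _))

theorem exists_iso_block_prod [FiniteDimensional ℂ V] (P : LinPencil V W) (p : Option ℂ)
    (hker : ∃ v ≠ 0, (reparam p P).A v = 0) :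
    ∃ (b : KBlock) (V' : Submodule ℂ V) (W' : Submodule ℂ W) (P' : LinPencil V' W'),
      b.valid ∧ Iso P (b.toPencil.lin.prod P') := by
  by_cases h : ∃ l y, (reparam p P).IsChain l y ∧ (reparam p P).B (y l) = 0
  · obtain ⟨k, V', W', P', hP⟩ := exists_iso_Lblk_prod_of_closed _ h
    exact ⟨.L k, V', W', _, trivial, hP.of_reparam_prod p (iso_reparam_Lblk p k)⟩
  · obtain ⟨k, V', W', P', hP⟩ := exists_iso_Eblk_prod_of_not_closed _ hker h
    refine ⟨Eb p (k + 1), V', W', _, ?_, hP.of_reparam_prod p (iso_reparam_Eb p (k + 1))⟩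
    cases p <;> exact Nat.le_add_left 1 k

end LinPencil

open LinPencil

namespace Pencil

theorem dsum_lin_iso {m n p q : ℕ} (P : Pencil m n) (Q : Pencil p q) :
    Iso (dsum P Q).lin (P.lin.prod Q.lin) := by
  have hblock : ∀ (M : Matrix (Fin m) (Fin n) ℂ) (N : Matrix (Fin p) (Fin q) ℂ)
      (x : Fin (n + q) → ℂ),
      (LinearEquiv.funCongrLeft ℂ ℂ finSumFinEquiv ≪≫ₗ
        LinearEquiv.sumArrowLequivProdArrow (Fin m) (Fin p) ℂ ℂ)
        ((fromBlocks M 0 0 N).submatrix finSumFinEquiv.symm finSumFinEquiv.symm *ᵥ x) =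
      (M.toLin'.prodMap N.toLin') ((LinearEquiv.funCongrLeft ℂ ℂ finSumFinEquiv ≪≫ₗ
        LinearEquiv.sumArrowLequivProdArrow (Fin n) (Fin q) ℂ ℂ) x) := by
    intro M N x
    rw [Matrix.submatrix_mulVec_equiv]
    ext i <;>
    simp [LinearMap.funLeft_apply, Matrix.mulVec, dotProduct]
  exact ⟨_, _, hblock _ _, hblock _ _⟩

/-- The transposed pencil. -/
def transpose {m n : ℕ} (P : Pencil m n) : Pencil n m := (P.1ᵀ, P.2ᵀ)

theorem transpose_dsum {m n p q : ℕ} (P : Pencil m n) (Q : Pencil p q) :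
    (dsum P Q).transpose = dsum P.transpose Q.transpose := by
  simp [dsum, transpose, Matrix.fromBlocks_transpose]

theorem lin_iso_iff {m n m' n' : ℕ} {P : Pencil m n} {Q : Pencil m' n'} :
    Iso P.lin Q.lin ↔ ∃ (e : (Fin n → ℂ) ≃ₗ[ℂ] (Fin n' → ℂ)) (f : (Fin m → ℂ) ≃ₗ[ℂ] (Fin m' → ℂ)),
      LinearMap.toMatrix' f.toLinearMap * P.1 = Q.1 * LinearMap.toMatrix' e.toLinearMap ∧
      LinearMap.toMatrix' f.toLinearMap * P.2 = Q.2 * LinearMap.toMatrix' e.toLinearMap := by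
  have hcoeff : ∀ (e : (Fin n → ℂ) ≃ₗ[ℂ] (Fin n' → ℂ)) (f : (Fin m → ℂ) ≃ₗ[ℂ] (Fin m' → ℂ))
      (M : Matrix (Fin m) (Fin n) ℂ) (N : Matrix (Fin m') (Fin n') ℂ),
      (∀ x, f (M.toLin' x) = N.toLin' (e x)) ↔
      LinearMap.toMatrix' f.toLinearMap * M = N * LinearMap.toMatrix' e.toLinearMap := by
    intro e f M N
    rw [← Matrix.toLin'.injective.eq_iff, Matrix.toLin'_mul, Matrix.toLin'_mul,
      Matrix.toLin'_toMatrix', Matrix.toLin'_toMatrix', LinearMap.ext_iff]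
    rfl
  simp only [Iso, lin, hcoeff]

theorem lin_iso_transpose {m n m' n' : ℕ} {P : Pencil m n} {Q : Pencil m' n'}
    (h : Iso P.lin Q.lin) : Iso P.transpose.lin Q.transpose.lin := by
  obtain ⟨e, f, hA, hB⟩ := lin_iso_iff.1 h
  have inv : ∀ {a b : ℕ} (g : (Fin a → ℂ) ≃ₗ[ℂ] (Fin b → ℂ)),
      (LinearMap.toMatrix' g.toLinearMap)ᵀ * (LinearMap.toMatrix' g.symm.toLinearMap)ᵀ = 1 := by
    intro a b g
    rw [← Matrix.transpose_mul, ← LinearMap.toMatrix'_comp]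
    simp
  have inv' : ∀ {a b : ℕ} (g : (Fin a → ℂ) ≃ₗ[ℂ] (Fin b → ℂ)),
      (LinearMap.toMatrix' g.symm.toLinearMap)ᵀ * (LinearMap.toMatrix' g.toLinearMap)ᵀ = 1 :=
    fun g => inv g.symm
  have hmat : ∀ {M : Matrix (Fin m) (Fin n) ℂ} {N : Matrix (Fin m') (Fin n') ℂ},
      LinearMap.toMatrix' f.toLinearMap * M = N * LinearMap.toMatrix' e.toLinearMap →
      LinearMap.toMatrix' (Matrix.toLin'OfInv (inv' e) (inv e)).toLinearMap * Nᵀ =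
        Mᵀ * LinearMap.toMatrix' (Matrix.toLin'OfInv (inv' f) (inv f)).toLinearMap := by
    intro M N hMN
    have hT : ∀ {a b : ℕ} (g : (Fin a → ℂ) ≃ₗ[ℂ] (Fin b → ℂ)),
        LinearMap.toMatrix' (Matrix.toLin'OfInv (inv' g) (inv g)).toLinearMap =
          (LinearMap.toMatrix' g.toLinearMap)ᵀ :=
      fun g => LinearMap.toMatrix'_toLin' _
    rw [hT, hT, ← Matrix.transpose_mul, ← Matrix.transpose_mul, hMN]
  exact Iso.symm (lin_iso_iff.2 ⟨_, _, hmat hA, hmat hB⟩)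

end Pencil

namespace KBlock

/-- The block of the transposed pencil. -/
def flip : KBlock → KBlock
  | E k μ => E k μ
  | Einf k => Einf k
  | L k => LT k
  | LT k => L k

theorem flip_flip (b : KBlock) : b.flip.flip = b := by
  cases b <;> rfl

theorem valid_flip {b : KBlock} (h : b.valid) : b.flip.valid := by
  cases b <;> exact h

theorem _root_.Jmat_transpose_eq (k : ℕ) (μ : ℂ) :
    (Jmat k μ)ᵀ = (Jmat k μ).submatrix Fin.rev Fin.rev := by
  ext i j
  simp only [Jmat, Matrix.transpose_apply, Matrix.submatrix_apply, Matrix.of_apply, Fin.val_rev]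
  congr 1
  · exact propext (by omega)
  · congr 1
    exact propext (by omega)

theorem transpose_lin_iso (b : KBlock) : Iso b.toPencil.transpose.lin b.flip.toPencil.lin := by
  have hrev : ∀ (k : ℕ) (M : Matrix (Fin k) (Fin k) ℂ) (x : Fin k → ℂ),
      LinearEquiv.funCongrLeft ℂ ℂ Fin.revPerm (M.submatrix Fin.rev Fin.rev *ᵥ x) =
        M *ᵥ LinearEquiv.funCongrLeft ℂ ℂ Fin.revPerm x := by
    intro k M x
    have h := Matrix.submatrix_mulVec_equiv M x Fin.rev Fin.revPerm
    ext i
    have hi := congrFun h (Fin.rev i)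
    rw [Function.comp_apply, Fin.rev_rev] at hi
    exact hi
  have hJ : ∀ (k : ℕ) (μ : ℂ) (x : Fin k → ℂ),
      LinearEquiv.funCongrLeft ℂ ℂ Fin.revPerm ((Jmat k μ)ᵀ *ᵥ x) =
        Jmat k μ *ᵥ LinearEquiv.funCongrLeft ℂ ℂ Fin.revPerm x := by
    intro k μ x
    rw [Jmat_transpose_eq, hrev]
  have h1 : ∀ (k : ℕ) (x : Fin k → ℂ),
      LinearEquiv.funCongrLeft ℂ ℂ Fin.revPerm ((1 : Matrix (Fin k) (Fin k) ℂ)ᵀ *ᵥ x) =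
        (1 : Matrix (Fin k) (Fin k) ℂ) *ᵥ LinearEquiv.funCongrLeft ℂ ℂ Fin.revPerm x := by
    intro k x
    rw [Matrix.transpose_one, Matrix.one_mulVec, Matrix.one_mulVec]
  cases b with
  | E k μ => exact ⟨_, _, hJ k μ, h1 k⟩
  | Einf k => exact ⟨_, _, h1 k, hJ k 0⟩
  | L k => exact Iso.refl _
  | LT k => exact Iso.refl _

end KBlock

theorem pencilOfList_cons_lin_iso (b : KBlock) (l : List KBlock) :
    Iso (pencilOfList (b :: l)).lin (b.toPencil.lin.prod (pencilOfList l).lin) :=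
  Pencil.dsum_lin_iso _ _

theorem pencilOfList_transpose_lin_iso (l : List KBlock) :
    Iso (pencilOfList l).transpose.lin (pencilOfList (l.map KBlock.flip)).lin := by
  induction l with
  | nil => exact Iso.refl _
  | cons b l ih =>
    have h : (pencilOfList (b :: l)).transpose =
        Pencil.dsum b.toPencil.transpose (pencilOfList l).transpose :=
      Pencil.transpose_dsum _ _
    rw [List.map_cons]
    refine Iso.trans ?_ (pencilOfList_cons_lin_iso _ _).symm
    have h' : Iso (pencilOfList (b :: l)).transpose.lin
        (b.toPencil.transpose.lin.prod (pencilOfList l).transpose.lin) := by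
      rw [h]
      exact Pencil.dsum_lin_iso _ _
    exact h'.trans (b.transpose_lin_iso.prod ih)

namespace Pencil

theorem exists_iso_dsum_of_ker {m n : ℕ} (P : Pencil m n) (p : Option ℂ)
    (hker : ∃ v ≠ 0, (reparam p P.lin).A v = 0) :
    ∃ (b : KBlock) (m' n' : ℕ) (P' : Pencil m' n'),
      b.valid ∧ Iso P.lin (dsum b.toPencil P').lin := by
  obtain ⟨b, V', W', P', hb, hP⟩ := LinPencil.exists_iso_block_prod P.lin p hker
  obtain ⟨m', n', Q, hQ⟩ := P'.exists_pencil_iso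
  exact ⟨b, m', n', Q, hb, (hP.trans ((Iso.refl _).prod hQ)).trans (dsum_lin_iso _ _).symm⟩

theorem exists_ker {m n : ℕ} (P : Pencil m n) (hmn : 0 < m + n) :
    (∃ p, ∃ v ≠ 0, (reparam p P.lin).A v = 0) ∨
      ∃ p, ∃ v ≠ 0, (reparam p P.transpose.lin).A v = 0 := by
  by_contra! h
  obtain ⟨h₁, h₂⟩ := h
  have hinj : Function.Injective (Matrix.toLin' P.2) := by
    rw [injective_iff_map_eq_zero]
    intro v hv
    by_contra hne
    exact h₁ none v hne hv
  have hinj' : Function.Injective (Matrix.toLin' P.2ᵀ) := by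
    rw [injective_iff_map_eq_zero]
    intro v hv
    by_contra hne
    exact h₂ none v hne hv
  have hnm : n ≤ m := by simpa using LinearMap.finrank_le_finrank_of_injective hinj
  have hmn' : m ≤ n := by simpa using LinearMap.finrank_le_finrank_of_injective hinj'
  obtain rfl : m = n := le_antisymm hmn' hnm
  have : Nonempty (Fin m) := ⟨⟨0, by omega⟩⟩
  let e := LinearEquiv.ofInjectiveEndo _ hinj
  obtain ⟨μ, hμ⟩ := Module.End.exists_eigenvalue (e.symm.toLinearMap ∘ₗ Matrix.toLin' P.1)
  obtain ⟨v, hv⟩ := hμ.exists_hasEigenvector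
  refine h₁ (some μ) v hv.2 ?_
  have hv' : e.symm (Matrix.toLin' P.1 v) = μ • v := hv.apply_eq_smul
  rw [LinearEquiv.symm_apply_eq, map_smul] at hv'
  change Matrix.toLin' P.1 v - μ • Matrix.toLin' P.2 v = 0
  rw [hv', sub_eq_zero]
  rfl

theorem lin_iso_size_eq {m n m' n' : ℕ} {P : Pencil m n} {Q : Pencil m' n'}
    (h : Iso P.lin Q.lin) : m = m' ∧ n = n' := by
  obtain ⟨e, f, -⟩ := h
  exact ⟨by simpa using f.finrank_eq, by simpa using e.finrank_eq⟩

theorem exists_iso_dsum {m n : ℕ} (P : Pencil m n) (hmn : 0 < m + n) :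
    ∃ (b : KBlock) (m' n' : ℕ) (P' : Pencil m' n'),
      b.valid ∧ Iso P.lin (dsum b.toPencil P').lin := by
  obtain ⟨p, hp⟩ | ⟨p, hp⟩ := P.exists_ker hmn
  · exact P.exists_iso_dsum_of_ker p hp
  · obtain ⟨b, m', n', P', hb, hP⟩ := P.transpose.exists_iso_dsum_of_ker p hp
    refine ⟨b.flip, n', m', P'.transpose, KBlock.valid_flip hb, ?_⟩
    have h := lin_iso_transpose hP
    rw [transpose_dsum] at h
    exact (h.trans (dsum_lin_iso _ _)).trans
      ((b.transpose_lin_iso.prod (Iso.refl _)).trans (dsum_lin_iso _ _).symm)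

theorem exists_iso_pencilOfList {m n : ℕ} (P : Pencil m n) :
    ∃ l : List KBlock, (∀ b ∈ l, b.valid) ∧ Iso P.lin (pencilOfList l).lin := by
  induction hd : m + n using Nat.strong_induction_on generalizing m n with
  | _ d ih =>
    obtain hmn | hmn := Nat.eq_zero_or_pos (m + n)
    · obtain ⟨rfl, rfl⟩ : m = 0 ∧ n = 0 := by omega
      exact ⟨[], by simp, LinearEquiv.refl ℂ _, LinearEquiv.refl ℂ _,
        fun _ => funext fun i : Fin 0 => i.elim0, fun _ => funext fun i : Fin 0 => i.elim0⟩
    · obtain ⟨b, m', n', P', hb, hP⟩ := P.exists_iso_dsum hmn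
      obtain ⟨hm, hn⟩ := lin_iso_size_eq hP
      have hpos : 0 < b.rows + b.cols := by
        cases b <;> simp only [KBlock.valid, KBlock.rows, KBlock.cols] at hb ⊢ <;> omega
      obtain ⟨l, hl, hPl⟩ := ih (m' + n') (by omega) P' rfl
      refine ⟨b :: l, by simpa using ⟨hb, hl⟩, hP.trans ?_⟩
      exact (dsum_lin_iso _ _).trans
        (((Iso.refl _).prod hPl).trans (pencilOfList_cons_lin_iso b l).symm)

theorem strictEquiv_iff_lin_iso {m n : ℕ} {P Q : Pencil m n} :
    StrictEquiv P Q ↔ Iso P.lin Q.lin := by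
  rw [lin_iso_iff]
  constructor
  · rintro ⟨S, R, hS, hR, h₁, h₂⟩
    have hS' : IsUnit S⁻¹ := Matrix.isUnit_nonsing_inv_iff.2 hS
    have hR' : IsUnit R⁻¹ := Matrix.isUnit_nonsing_inv_iff.2 hR
    have hmat : ∀ {k : ℕ} {T : Matrix (Fin k) (Fin k) ℂ} (hT : IsUnit T),
        LinearMap.toMatrix' (T.equivOfIsUnit hT).toLinearMap = T :=
      fun _ => LinearMap.toMatrix'_toLin' _
    have hRR : R * R⁻¹ = 1 := Matrix.mul_nonsing_inv _ ((Matrix.isUnit_iff_isUnit_det _).1 hR)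
    refine ⟨R⁻¹.equivOfIsUnit hR', S⁻¹.equivOfIsUnit hS', ?_, ?_⟩
    · rw [hmat, hmat, ← h₁, Matrix.mul_assoc, hRR, Matrix.mul_one]
    · rw [hmat, hmat, ← h₂, Matrix.mul_assoc, hRR, Matrix.mul_one]
  · rintro ⟨e, f, h₁, h₂⟩
    have inv : ∀ {k : ℕ} (g : (Fin k → ℂ) ≃ₗ[ℂ] (Fin k → ℂ)),
        LinearMap.toMatrix' g.toLinearMap * LinearMap.toMatrix' g.symm.toLinearMap = 1 := by
      intro k g
      rw [← LinearMap.toMatrix'_comp]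
      simp
    refine ⟨LinearMap.toMatrix' f.symm.toLinearMap, LinearMap.toMatrix' e.symm.toLinearMap,
      IsUnit.of_mul_eq_one _ (inv f.symm), IsUnit.of_mul_eq_one _ (inv e.symm), ?_, ?_⟩
    · rw [Matrix.inv_eq_left_inv (inv f), h₁, Matrix.mul_assoc, inv, Matrix.mul_one]
    · rw [Matrix.inv_eq_left_inv (inv f), h₂, Matrix.mul_assoc, inv, Matrix.mul_one]

theorem cast_lin_iso {m n m' n' : ℕ} (hm : m = m') (hn : n = n') (P : Pencil m n) :
    Iso (cast hm hn P).lin P.lin := by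
  subst hm hn
  exact Iso.refl _

end Pencil

theorem representsE_iff {m n : ℕ} (P : Pencil m n) (s : Multiset KBlock) :
    RepresentsE P s ↔ ∃ l : List KBlock, (∀ b ∈ l, b.valid) ∧ (l : Multiset KBlock) = s ∧
      Iso P.lin (pencilOfList l).lin := by
  constructor
  · rintro ⟨hs, l, hm, hn, rfl, h⟩
    exact ⟨l, by simpa using hs, rfl,
      (Pencil.strictEquiv_iff_lin_iso.1 h).symm.trans (Pencil.cast_lin_iso _ _ _)⟩
  · rintro ⟨l, hl, rfl, h⟩
    obtain ⟨hm, hn⟩ := Pencil.lin_iso_size_eq h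
    exact ⟨by simpa using hl, l, hm.symm, hn.symm, rfl, Pencil.strictEquiv_iff_lin_iso.2
      ((Pencil.cast_lin_iso _ _ _).trans h.symm)⟩

namespace LinPencil

variable {V W V₁ W₁ : Type*}
  [AddCommGroup V] [Module ℂ V] [AddCommGroup W] [Module ℂ W]
  [AddCommGroup V₁] [Module ℂ V₁] [AddCommGroup W₁] [Module ℂ W₁]

/-- The Wong sequence of a pencil. -/
def wong (P : LinPencil V W) : ℕ → Submodule ℂ V
  | 0 => ⊥
  | j + 1 => ((P.wong j).map P.B).comap P.A

theorem wong_eq_bot {P : LinPencil V W} (h : ∀ x, P.A x = 0 → x = 0) (j : ℕ) : P.wong j = ⊥ := by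
  induction j with
  | zero => rfl
  | succ j ih =>
    rw [wong, ih, Submodule.map_bot, Submodule.eq_bot_iff]
    exact fun x hx => h x (by simpa using hx)

theorem wong_prod (P : LinPencil V W) (Q : LinPencil V₁ W₁) (j : ℕ) :
    (P.prod Q).wong j = (P.wong j).prod (Q.wong j) := by
  induction j with
  | zero => exact Submodule.prod_bot.symm
  | succ j ih =>
    ext ⟨x, y⟩
    rw [wong, ih]
    simp only [wong, LinPencil.prod, Submodule.mem_comap, Submodule.mem_map, Submodule.mem_prod,
      LinearMap.prodMap_apply, Prod.exists, Prod.mk.injEq]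
    constructor
    · rintro ⟨a, b, ⟨ha, hb⟩, hx, hy⟩
      exact ⟨⟨a, ha, hx⟩, b, hb, hy⟩
    · rintro ⟨⟨a, ha, hx⟩, b, hb, hy⟩
      exact ⟨a, b, ⟨ha, hb⟩, hx, hy⟩

theorem finrank_wong_prod [FiniteDimensional ℂ V] [FiniteDimensional ℂ V₁]
    (P : LinPencil V W) (Q : LinPencil V₁ W₁) (j : ℕ) :
    Module.finrank ℂ ((P.prod Q).wong j) =
      Module.finrank ℂ (P.wong j) + Module.finrank ℂ (Q.wong j) := by
  rw [wong_prod, ← Module.finrank_prod]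
  let e : ((P.wong j).prod (Q.wong j)) ≃ₗ[ℂ] P.wong j × Q.wong j :=
    { toFun := fun x => (⟨x.1.1, x.2.1⟩, ⟨x.1.2, x.2.2⟩)
      invFun := fun y => ⟨(y.1.1, y.2.1), y.1.2, y.2.2⟩
      map_add' := fun _ _ => rfl
      map_smul' := fun _ _ => rfl
      left_inv := fun _ => rfl
      right_inv := fun _ => rfl }
  exact e.finrank_eq

theorem Iso.finrank_wong {P : LinPencil V W} {Q : LinPencil V₁ W₁} (h : Iso P Q) (j : ℕ) :
    Module.finrank ℂ (P.wong j) = Module.finrank ℂ (Q.wong j) := by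
  obtain ⟨e, f, hA, hB⟩ := h
  have hmem : ∀ j x, e x ∈ Q.wong j ↔ x ∈ P.wong j := by
    intro j
    induction j with
    | zero => simp [wong]
    | succ j ih =>
      intro x
      simp only [wong, Submodule.mem_comap, Submodule.mem_map, ← hA, e.surjective.exists, ih, ← hB,
        f.injective.eq_iff]
  have hmap : (P.wong j).map (e : V →ₗ[ℂ] V₁) = Q.wong j := by
    ext y
    obtain ⟨x, rfl⟩ := e.surjective y
    simp [hmem]
  rw [← hmap, LinearEquiv.finrank_map_eq]

/-- The vectors supported on the first `j` coordinates. -/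
def firstCoords (n j : ℕ) : Submodule ℂ (Fin n → ℂ) where
  carrier := {x | ∀ i : Fin n, j ≤ i → x i = 0}
  add_mem' hx hy i hi := by simp [hx i hi, hy i hi]
  zero_mem' _ _ := rfl
  smul_mem' c x hx i hi := by simp [hx i hi]

theorem mem_firstCoords {n j : ℕ} {x : Fin n → ℂ} :
    x ∈ firstCoords n j ↔ ∀ i : Fin n, j ≤ i → x i = 0 := Iff.rfl

theorem finrank_firstCoords (n j : ℕ) : Module.finrank ℂ (firstCoords n j) = min j n := by
  let T : (Fin (min j n) → ℂ) →ₗ[ℂ] (Fin n → ℂ) :=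
    LinearMap.pi fun i => if h : (i : ℕ) < min j n then LinearMap.proj ⟨i, h⟩ else 0
  have hT : ∀ x i, T x i = if h : (i : ℕ) < min j n then x ⟨i, h⟩ else 0 := by
    intro x i
    simp only [T, LinearMap.pi_apply]
    split_ifs <;> rfl
  have hinj : Function.Injective T := by
    intro x y hxy
    ext i
    have hi := congrFun hxy ⟨i, by omega⟩
    simpa only [hT, i.2, dif_pos] using hi
  have hrange : LinearMap.range T = firstCoords n j := by
    ext x
    rw [LinearMap.mem_range, mem_firstCoords]
    constructor
    · rintro ⟨y, rfl⟩ i hi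
      rw [hT, dif_neg (by omega)]
    · intro hx
      refine ⟨fun i => x ⟨i, by omega⟩, ?_⟩
      ext i
      rw [hT]
      split_ifs with h
      · rfl
      · exact (hx i (by omega)).symm
  rw [← hrange, LinearMap.finrank_range_of_inj hinj, Module.finrank_fin_fun]

theorem wong_Eblk_zero (k j : ℕ) : (Eblk k 0).lin.wong j = firstCoords k j := by
  induction j with
  | zero =>
    ext x
    simp [wong, mem_firstCoords, funext_iff]
  | succ j ih =>
    ext x
    simp only [wong, ih, Submodule.mem_comap, Submodule.mem_map, Pencil.lin_A, Pencil.lin_B]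
    simp only [Eblk, Matrix.one_mulVec, exists_eq_right, mem_firstCoords, Jmat_zero_mulVec]
    constructor
    · rintro h ⟨_ | i, hi⟩ hji
      · simp at hji
      · simpa [hi] using h ⟨i, by omega⟩ (by simpa using hji)
    · intro h i hji
      split_ifs with hi
      · exact h _ (by simpa using hji)
      · rfl

theorem wong_Lblk (k j : ℕ) : (Lblk k).lin.wong j = firstCoords (k + 1) j := by
  induction j with
  | zero =>
    ext x
    simp [wong, mem_firstCoords, funext_iff]
  | succ j ih =>
    ext x
    simp only [wong, ih, Submodule.mem_comap, Submodule.mem_map, Pencil.lin_A, Pencil.lin_B,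
      mem_firstCoords]
    simp only [Lblk]
    constructor
    · rintro ⟨y, hy, hyx⟩ i hi
      obtain ⟨i, rfl⟩ := Fin.exists_succ_eq.2 (show i ≠ 0 by rintro rfl; simp at hi)
      have h := congrFun hyx i
      rw [Gmat_mulVec, Fmat_mulVec] at h
      rw [← h]
      exact hy _ (by simpa using hi)
    · intro h
      refine ⟨Fin.snoc (fun i => x i.succ) 0, fun i hi => ?_, ?_⟩
      · induction i using Fin.lastCases with
        | last => simp
        | cast i => simpa using h i.succ (by simpa using hi)
      · ext i
        simp [Fmat_mulVec, Gmat_mulVec]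

end LinPencil
theorem one_sub_smul_Jmat_mulVec_eq_zero {k : ℕ} {μ : ℂ} {x : Fin k → ℂ}
    (h : (1 - μ • Jmat k 0) *ᵥ x = 0) : x = 0 := by
  refine Matrix.eq_zero_of_mulVec_eq_zero ?_ h
  have htri : (1 - μ • Jmat k 0).IsUpperTriangular := by
    intro i j hij
    have hlt : (j : ℕ) < i := hij
    have h₁ : i ≠ j := by rintro rfl; omega
    have h₂ : (j : ℕ) ≠ i := by omega
    have h₃ : (j : ℕ) ≠ i + 1 := by omega
    simp [Jmat, h₁, h₂, h₃]
  rw [Matrix.det_of_isUpperTriangular htri]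
  simp [Jmat]

theorem Jmat_mulVec_eq_zero {k : ℕ} {μ : ℂ} (hμ : μ ≠ 0) {x : Fin k → ℂ}
    (h : Jmat k μ *ᵥ x = 0) : x = 0 := by
  refine Matrix.eq_zero_of_mulVec_eq_zero ?_ h
  have htri : (Jmat k μ).IsUpperTriangular := by
    intro i j hij
    have hlt : (j : ℕ) < i := hij
    have h₂ : (j : ℕ) ≠ i := by omega
    have h₃ : (j : ℕ) ≠ i + 1 := by omega
    simp [Jmat, h₂, h₃]
  rw [Matrix.det_of_isUpperTriangular htri]
  simp [Jmat, hμ]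

theorem Fmat_sub_smul_Gmat_transpose_submatrix (k : ℕ) (μ : ℂ) :
    ((Fmat k)ᵀ - μ • (Gmat k)ᵀ).submatrix Fin.succ id = 1 - μ • Jmat k 0 := by
  ext i j
  have hij : i = j ↔ (i : ℕ) = j := Fin.ext_iff
  have hji : (i : ℕ) + 1 = j ↔ (j : ℕ) = i + 1 := eq_comm
  have h : (j : ℕ) = i + 1 → (j : ℕ) ≠ i := by omega
  by_cases h' : (j : ℕ) = i <;> simp_all [Fmat, Gmat, Jmat, Matrix.one_apply]

theorem Gmat_transpose_submatrix (k : ℕ) : (Gmat k)ᵀ.submatrix Fin.castSucc id = 1 := by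
  ext i j
  simp [Gmat, Matrix.one_apply, Fin.ext_iff]

theorem KBlock.reparam_LT_ker {k : ℕ} (p : Option ℂ) {x : Fin k → ℂ}
    (h : (reparam p (LTblk k).lin).A x = 0) : x = 0 := by
  cases p with
  | none =>
    have h' : (Gmat k)ᵀ.submatrix Fin.castSucc id *ᵥ x = 0 :=
      funext fun i => congrFun (show (Gmat k)ᵀ *ᵥ x = 0 from h) i.castSucc
    rwa [Gmat_transpose_submatrix, Matrix.one_mulVec] at h'
  | some μ =>
    have h₁ : ((Fmat k)ᵀ - μ • (Gmat k)ᵀ) *ᵥ x = 0 := by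
      rw [Matrix.sub_mulVec, Matrix.smul_mulVec]
      exact h
    have h₂ : ((Fmat k)ᵀ - μ • (Gmat k)ᵀ).submatrix Fin.succ id *ᵥ x = 0 :=
      funext fun i => congrFun h₁ i.succ
    rw [Fmat_sub_smul_Gmat_transpose_submatrix] at h₂
    exact one_sub_smul_Jmat_mulVec_eq_zero h₂

theorem reparam_Eb_ker {p q : Option ℂ} (hpq : p ≠ q) (k : ℕ) :
    ∀ x, (reparam p (Eb q k).toPencil.lin).A x = 0 → x = 0 := by
  match p, q, hpq with
  | none, none, hpq => exact absurd rfl hpq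
  | none, some μ, _ =>
    intro (x : Fin k → ℂ) (h : (1 : Matrix (Fin k) (Fin k) ℂ) *ᵥ x = 0)
    rwa [Matrix.one_mulVec] at h
  | some μ, none, _ =>
    intro (x : Fin k → ℂ) (h : (1 : Matrix (Fin k) (Fin k) ℂ) *ᵥ x - μ • Jmat k 0 *ᵥ x = 0)
    rw [← Matrix.smul_mulVec, ← Matrix.sub_mulVec] at h
    exact one_sub_smul_Jmat_mulVec_eq_zero h
  | some μ, some ν, hpq =>
    intro (x : Fin k → ℂ) (h : Jmat k ν *ᵥ x - μ • (1 : Matrix (Fin k) (Fin k) ℂ) *ᵥ x = 0)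
    rw [← Matrix.smul_mulVec, ← Matrix.sub_mulVec, Jmat_sub_smul_one] at h
    exact Jmat_mulVec_eq_zero (sub_ne_zero.2 fun hνμ => hpq (by rw [hνμ])) h

namespace KBlock

open scoped Classical in
/-- The dimension of the `j`-th term of the Wong sequence of a block at the point `p`. -/
def wongRank (p : Option ℂ) (j : ℕ) : KBlock → ℕ
  | E k μ => if p = some μ then min j k else 0
  | Einf k => if p = none then min j k else 0
  | L k => min j (k + 1)
  | LT _ => 0

theorem finrank_wong_Eb (p q : Option ℂ) (k j : ℕ) :
    Module.finrank ℂ ((reparam p (Eb q k).toPencil.lin).wong j) = (Eb q k).wongRank p j := by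
  have hrank : (Eb q k).wongRank p j = if p = q then min j k else 0 := by
    cases q <;> rfl
  rw [hrank]
  split_ifs with h
  · subst h
    rw [(iso_reparam_Eb p k).finrank_wong, wong_Eblk_zero, finrank_firstCoords]
  · rw [wong_eq_bot (reparam_Eb_ker h k), finrank_bot]

theorem finrank_wong (p : Option ℂ) (j : ℕ) (b : KBlock) :
    Module.finrank ℂ ((reparam p b.toPencil.lin).wong j) = b.wongRank p j := by
  cases b with
  | E k μ => exact finrank_wong_Eb p (some μ) k j
  | Einf k => exact finrank_wong_Eb p none k j
  | L k =>
    change Module.finrank ℂ ((reparam p (Lblk k).lin).wong j) = min j (k + 1)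
    rw [(iso_reparam_Lblk p k).finrank_wong, wong_Lblk, finrank_firstCoords]
  | LT k =>
    change Module.finrank ℂ ((reparam p (LTblk k).lin).wong j) = 0
    rw [wong_eq_bot fun x hx => reparam_LT_ker p hx, finrank_bot]

open scoped Classical in
theorem two_mul_wongRank (p : Option ℂ) (j : ℕ) (b : KBlock) :
    2 * b.wongRank p (j + 1) = b.wongRank p j + b.wongRank p (j + 2) +
      ((if b = Eb p (j + 1) then 1 else 0) + if b = L j then 1 else 0) := by
  cases b with
  | E k μ =>
    have h : E k μ = Eb p (j + 1) ↔ p = some μ ∧ k = j + 1 := by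
      cases p <;> simp [Eb, eq_comm, and_comm]
    by_cases hp : p = some μ
    · have h' : E k μ = Eb p (j + 1) ↔ k = j + 1 := h.trans (and_iff_right hp)
      simp only [wongRank, h', if_pos hp, reduceCtorEq, if_false]
      split_ifs <;> omega
    · simp [wongRank, h, hp]
  | Einf k =>
    have h : Einf k = Eb p (j + 1) ↔ p = none ∧ k = j + 1 := by
      cases p <;> simp [Eb]
    by_cases hp : p = none
    · have h' : Einf k = Eb p (j + 1) ↔ k = j + 1 := h.trans (and_iff_right hp)
      simp only [wongRank, h', if_pos hp, reduceCtorEq, if_false]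
      split_ifs <;> omega
    · simp [wongRank, h, hp]
  | L k =>
    have h : L k ≠ Eb p (j + 1) := by cases p <;> simp [Eb]
    simp only [wongRank, h, if_false, L.injEq]
    split_ifs <;> omega
  | LT k =>
    have h : LT k ≠ Eb p (j + 1) := by cases p <;> simp [Eb]
    simp [wongRank, h]

end KBlock

theorem finrank_wong_pencilOfList (p : Option ℂ) (j : ℕ) (l : List KBlock) :
    Module.finrank ℂ ((reparam p (pencilOfList l).lin).wong j) =
      (l.map (KBlock.wongRank p j)).sum := by
  induction l with
  | nil =>
    have h : ∀ x, (reparam p (pencilOfList []).lin).A x = 0 → x = 0 :=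
      fun x _ => funext fun i : Fin 0 => i.elim0
    rw [wong_eq_bot h, finrank_bot]
    rfl
  | cons b l ih =>
    rw [((iso_reparam_iff p).2 (pencilOfList_cons_lin_iso b l)).finrank_wong, reparam_prod,
      finrank_wong_prod, b.finrank_wong, ih, List.map_cons, List.sum_cons]

open scoped Classical in
theorem two_mul_sum_wongRank (p : Option ℂ) (j : ℕ) (l : List KBlock) :
    2 * (l.map (KBlock.wongRank p (j + 1))).sum =
      (l.map (KBlock.wongRank p j)).sum + (l.map (KBlock.wongRank p (j + 2))).sum +
        (l.count (Eb p (j + 1)) + l.count (KBlock.L j)) := by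
  induction l with
  | nil => rfl
  | cons b l ih =>
    have h := b.two_mul_wongRank p j
    simp only [List.map_cons, List.sum_cons, List.count_cons, beq_iff_eq]
    omega

section Uniqueness

open scoped Classical

variable {l₁ l₂ : List KBlock}

theorem count_Eb_add_count_L_eq (h : Iso (pencilOfList l₁).lin (pencilOfList l₂).lin)
    (p : Option ℂ) (j : ℕ) :
    l₁.count (Eb p (j + 1)) + l₁.count (KBlock.L j) =
      l₂.count (Eb p (j + 1)) + l₂.count (KBlock.L j) := by
  have hsum : ∀ i, (l₁.map (KBlock.wongRank p i)).sum = (l₂.map (KBlock.wongRank p i)).sum := by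
    intro i
    rw [← finrank_wong_pencilOfList, ← finrank_wong_pencilOfList,
      ((iso_reparam_iff p).2 h).finrank_wong]
  have h₁ := two_mul_sum_wongRank p j l₁
  have h₂ := two_mul_sum_wongRank p j l₂
  rw [hsum, hsum, hsum] at h₁
  omega

theorem count_L_eq (h : Iso (pencilOfList l₁).lin (pencilOfList l₂).lin) (j : ℕ) :
    l₁.count (KBlock.L j) = l₂.count (KBlock.L j) := by
  have hinj : Function.Injective fun μ => KBlock.E (j + 1) μ := fun μ ν hμν => by simpa using hμν
  obtain ⟨_, ⟨μ, rfl⟩, hμ⟩ :=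
    (Set.infinite_range_of_injective hinj).exists_notMem_finset (l₁ ++ l₂).toFinset
  simp only [List.mem_toFinset, List.mem_append, not_or] at hμ
  have hcount := count_Eb_add_count_L_eq h (some μ) j
  simpa [Eb, List.count_eq_zero_of_not_mem hμ.1, List.count_eq_zero_of_not_mem hμ.2] using hcount

theorem count_Eb_eq (h : Iso (pencilOfList l₁).lin (pencilOfList l₂).lin) (p : Option ℂ) (j : ℕ) :
    l₁.count (Eb p (j + 1)) = l₂.count (Eb p (j + 1)) := by
  have hcount := count_Eb_add_count_L_eq h p j
  rw [count_L_eq h] at hcount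
  exact Nat.add_right_cancel hcount

theorem count_LT_eq (h : Iso (pencilOfList l₁).lin (pencilOfList l₂).lin) (j : ℕ) :
    l₁.count (KBlock.LT j) = l₂.count (KBlock.LT j) := by
  have h' : Iso (pencilOfList (l₁.map KBlock.flip)).lin (pencilOfList (l₂.map KBlock.flip)).lin :=
    (pencilOfList_transpose_lin_iso l₁).symm.trans
      ((Pencil.lin_iso_transpose h).trans (pencilOfList_transpose_lin_iso l₂))
  have hinj : Function.Injective KBlock.flip :=
    Function.LeftInverse.injective KBlock.flip_flip
  have hcount : ∀ l : List KBlock, (l.map KBlock.flip).count (KBlock.L j) = l.count (KBlock.LT j) :=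
    fun l => List.count_map_of_injective l KBlock.flip hinj (KBlock.LT j)
  rw [← hcount, ← hcount, count_L_eq h']

theorem perm_of_pencilOfList_iso (hl₁ : ∀ b ∈ l₁, b.valid) (hl₂ : ∀ b ∈ l₂, b.valid)
    (h : Iso (pencilOfList l₁).lin (pencilOfList l₂).lin) : l₁.Perm l₂ := by
  rw [List.perm_iff_count]
  have hinvalid : ∀ b : KBlock, ¬ b.valid → l₁.count b = l₂.count b := fun b hb => by
    rw [List.count_eq_zero_of_not_mem fun hmem => hb (hl₁ b hmem),
      List.count_eq_zero_of_not_mem fun hmem => hb (hl₂ b hmem)]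
  intro b
  match b with
  | .E 0 μ => exact hinvalid _ (by simp [KBlock.valid])
  | .E (k + 1) μ => exact count_Eb_eq h (some μ) k
  | .Einf 0 => exact hinvalid _ (by simp [KBlock.valid])
  | .Einf (k + 1) => exact count_Eb_eq h none k
  | .L k => exact count_L_eq h k
  | .LT k => exact count_LT_eq h k

end Uniqueness

/-- **Kronecker canonical form** (Theorem 2.1): every `m × n` complex matrix
pencil is strictly equivalent to a direct sum of blocks `E_k(μ)` (`μ ∈ ℂ`),
`E_k(∞)`, `L_k`, `L_kᵀ`, and this direct sum is uniquely determined up to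
permutation of the summands (i.e. the multiset of blocks is unique). -/
theorem kronecker_canonical_form {m n : ℕ} (P : Pencil m n) :
    (∃ s : Multiset KBlock, RepresentsE P s) ∧
      ∀ s₁ s₂ : Multiset KBlock, RepresentsE P s₁ → RepresentsE P s₂ → s₁ = s₂ := by
  constructor
  · obtain ⟨l, hl, h⟩ := P.exists_iso_pencilOfList
    exact ⟨l, (representsE_iff P l).2 ⟨l, hl, rfl, h⟩⟩
  · intro s₁ s₂ hs₁ hs₂
    obtain ⟨l₁, hl₁, rfl, h₁⟩ := (representsE_iff P s₁).1 hs₁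
    obtain ⟨l₂, hl₂, rfl, h₂⟩ := (representsE_iff P s₂).1 hs₂
    exact Multiset.coe_eq_coe.2 (perm_of_pencilOfList_iso hl₁ hl₂ (h₁.symm.trans h₂))
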